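/- arXiv:2308.02175 — 2 statements merged into one kernel-verified Lean document; each statement's English description precedes it below -/
import Mathlib

section
/- Let U be a unitary operator on a complex Hilbert space H and f ∈ H. Then U⁻¹f belongs to the closed linear span of {Uⁿf : n ≥ 0} if and only if the closed linear span of {Uⁿf : n ≥ 0} equals the closed linear span of {U^{−n}f : n ≥ 0} (i.e. the cyclic subspace of f under U coincides with its cyclic subspace under U⁻¹). -/
/-- The closed cyclic span. -/
noncomputable def cycSpan {H : Type*} [NormedAddCommGroup H] [InnerProductSpace ℂ H]
    (U : H ≃ₗᵢ[ℂ] H) (f : H) : Submodule ℂ H :=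
  Submodule.span ℂ (Set.range fun n : ℕ => (U ^ n) f)

/-- If `U⁻¹ f` lies in the cyclic subspace, the cyclic subspace contains that of `U⁻¹`. -/
theorem cyc_le {H : Type*} [NormedAddCommGroup H] [InnerProductSpace ℂ H]
    (U : H ≃ₗᵢ[ℂ] H) (f : H) (h : U⁻¹ f ∈ (cycSpan U f).topologicalClosure) :
    (cycSpan U⁻¹ f).topologicalClosure ≤ (cycSpan U f).topologicalClosure := by
  have hinv : ∀ x ∈ (cycSpan U f).topologicalClosure,
      U⁻¹ x ∈ (cycSpan U f).topologicalClosure := by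
    have hle : (cycSpan U f).topologicalClosure ≤
        (cycSpan U f).topologicalClosure.comap (U⁻¹).toLinearEquiv.toLinearMap := by
      apply Submodule.topologicalClosure_minimal
      · refine Submodule.span_le.2 ?_
        rintro _ ⟨n, rfl⟩
        change U⁻¹ ((U ^ n) f) ∈ (cycSpan U f).topologicalClosure
        cases n with
        | zero => simpa using h
        | succ n =>
          have : U⁻¹ ((U ^ (n + 1)) f) = (U ^ n) f := by
            change (U⁻¹ * U ^ (n + 1)) f = _
            rw [pow_succ', inv_mul_cancel_left]
          rw [this]
          exact Submodule.le_topologicalClosure _ (Submodule.subset_span ⟨n, rfl⟩)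
      · exact (Submodule.isClosed_topologicalClosure _).preimage (U⁻¹).continuous
    exact fun x hx => hle hx
  apply Submodule.topologicalClosure_minimal _ _ (Submodule.isClosed_topologicalClosure _)
  refine Submodule.span_le.2 ?_
  rintro _ ⟨n, rfl⟩
  change (U⁻¹ ^ n) f ∈ (cycSpan U f).topologicalClosure
  induction n with
  | zero => exact Submodule.le_topologicalClosure _ (Submodule.subset_span ⟨0, by simp⟩)
  | succ n ih =>
    rw [pow_succ']
    exact hinv _ ih

/-- The adjoint trick: normality transfers the approximation from `U` to `U⁻¹`. -/
theorem cyc_symm {H : Type*} [NormedAddCommGroup H] [InnerProductSpace ℂ H] [CompleteSpace H]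
    (U : H ≃ₗᵢ[ℂ] H) (f : H) (h : U⁻¹ f ∈ (cycSpan U f).topologicalClosure) :
    U f ∈ (cycSpan U⁻¹ f).topologicalClosure := by
  obtain ⟨u, rfl⟩ := Unitary.linearIsometryEquiv.surjective U
  have hpow : ∀ n : ℕ, ∀ x, (Unitary.linearIsometryEquiv u ^ n) x
      = ((u : H →L[ℂ] H) ^ n) x := by
    intro n x
    rw [← map_pow]
    rfl
  have hpow' : ∀ n : ℕ, ∀ x, ((Unitary.linearIsometryEquiv u)⁻¹ ^ n) x
      = (star (u : H →L[ℂ] H) ^ n) x := by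
    intro n x
    rw [← map_inv, ← map_pow]
    rfl
  have hu : (u : H →L[ℂ] H) ∈ StarAlgebra.adjoin ℂ {(u : H →L[ℂ] H)} :=
    StarAlgebra.self_mem_adjoin_singleton ℂ _
  have key : ∀ y ∈ cycSpan (Unitary.linearIsometryEquiv u) f,
      ∃ T ∈ StarAlgebra.adjoin ℂ {(u : H →L[ℂ] H)}, T f = y ∧
        (star T) f ∈ cycSpan (Unitary.linearIsometryEquiv u)⁻¹ f := by
    intro y hy
    induction hy using Submodule.span_induction with
    | mem x hx =>
      obtain ⟨n, rfl⟩ := hx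
      refine ⟨(u : H →L[ℂ] H) ^ n, pow_mem hu n, (hpow n f).symm, ?_⟩
      rw [star_pow, ← hpow']
      exact Submodule.subset_span ⟨n, rfl⟩
    | zero => exact ⟨0, zero_mem _, by simp, by simp⟩
    | add x y _ _ hx hy =>
      obtain ⟨S, hS, rfl, hS'⟩ := hx
      obtain ⟨T, hT, rfl, hT'⟩ := hy
      refine ⟨S + T, add_mem hS hT, rfl, ?_⟩
      rw [star_add]
      exact add_mem hS' hT'
    | smul a x _ hx =>
      obtain ⟨S, hS, rfl, hS'⟩ := hx
      refine ⟨a • S, SMulMemClass.smul_mem a hS, rfl, ?_⟩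
      rw [star_smul]
      exact Submodule.smul_mem _ _ hS'
  have hcomm : IsMulCommutative (StarAlgebra.adjoin ℂ {(u : H →L[ℂ] H)}) := by
    apply StarAlgebra.isMulCommutative_adjoin
    · rintro _ rfl _ rfl
      rfl
    · rintro _ rfl _ rfl
      exact (Unitary.coe_mul_star_self u).trans (Unitary.coe_star_mul_self u).symm
  change _ ∈ closure _ at h
  change _ ∈ closure _
  rw [Metric.mem_closure_iff] at h ⊢
  intro ε hε
  obtain ⟨y, hy, hlt⟩ := h ε hε
  obtain ⟨T, hT, rfl, hT'⟩ := key y hy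
  refine ⟨_, hT', ?_⟩
  have hmem : star (u : H →L[ℂ] H) - T ∈ StarAlgebra.adjoin ℂ {(u : H →L[ℂ] H)} :=
    sub_mem (star_mem hu) hT
  have hn : IsStarNormal (star (u : H →L[ℂ] H) - T) :=
    ⟨setLike_mul_comm (star_mem hmem) hmem⟩
  have hnorm := ContinuousLinearMap.isStarNormal_iff_norm_eq_adjoint.1 hn f
  rw [← ContinuousLinearMap.star_eq_adjoint, star_sub, star_star] at hnorm
  rw [dist_eq_norm] at hlt ⊢
  exact lt_of_eq_of_lt hnorm.symm hlt

/-- For a unitary operator `U` on a complex Hilbert space `H` and `f ∈ H`,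
`U⁻¹ f` belongs to the closed linear span of `{Uⁿ f : n ≥ 0}` iff that closed span equals
the closed linear span of `{U⁻ⁿ f : n ≥ 0}`. -/
theorem cyclic_subspace_eq_iff_inv_mem
    {H : Type*} [NormedAddCommGroup H] [InnerProductSpace ℂ H] [CompleteSpace H]
    (U : H ≃ₗᵢ[ℂ] H) (f : H) :
    U.symm f ∈ (Submodule.span ℂ (Set.range fun n : ℕ => (U ^ n) f)).topologicalClosure ↔
      (Submodule.span ℂ (Set.range fun n : ℕ => (U ^ n) f)).topologicalClosure =
        (Submodule.span ℂ (Set.range fun n : ℕ => (U⁻¹ ^ n) f)).topologicalClosure := by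


  change U⁻¹ f ∈ (cycSpan U f).topologicalClosure ↔
    (cycSpan U f).topologicalClosure = (cycSpan U⁻¹ f).topologicalClosure
  constructor
  · intro h
    refine le_antisymm ?_ (cyc_le U f h)
    have := cyc_le U⁻¹ f (by rw [inv_inv]; exact cyc_symm U f h)
    rwa [inv_inv] at this
  · intro h
    rw [h]
    exact Submodule.le_topologicalClosure _ (Submodule.subset_span ⟨1, by simp⟩)
end

section
/- Let α be irrational and let T : S¹ → S¹, Tx = x + α mod 1, be the corresponding ergodic circle rotation on S¹ = ℝ/ℤ with Lebesgue (Haar) probability measure, with Koopman operator 𝒰 f = f∘T on L²(S¹; ℂ). Then there exists a probe vector p ∈ L²(S¹; ℂ) such that for every f ∈ L²(S¹; ℂ), the set {λ ∈ ℂ : f + λp is not a cyclic vector of 𝒰} is at most countable, hence Lebesgue-null in ℂ; in particular, the set of cyclic vectors of 𝒰 is prevalent in L²(S¹; ℂ). -/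
open MeasureTheory Filter

/-- The Koopman operator `𝒰_T : g ↦ g ∘ T` on `L²_μ`. -/
noncomputable def koopman {X : Type*} [MeasurableSpace X] {μ : Measure X}
    (T : X → X) (hT : MeasurePreserving T μ μ) : Lp ℂ 2 μ →L[ℂ] Lp ℂ 2 μ :=
  (Lp.compMeasurePreservingₗᵢ ℂ T hT).toContinuousLinearMap

/-- `g` is a cyclic vector of a bounded operator `U` on `L²_μ`. -/
def IsCyclicVector {X : Type*} [MeasurableSpace X] {μ : Measure X}
    (U : Lp ℂ 2 μ →L[ℂ] Lp ℂ 2 μ) (g : Lp ℂ 2 μ) : Prop :=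
  (Submodule.span ℂ (Set.range fun n : ℕ => (U ^ n) g)).topologicalClosure = ⊤

/-- A subset `S` of a complex vector space `V` is prevalent if there is a
finite-dimensional probe space (spanned by linearly independent `b 0, …, b (n-1)`) such
that for every `v ∈ V`, Lebesgue-almost every point of `v + E` (in the coordinates given
by the basis `b`) belongs to `S`. -/
def Prevalent {V : Type*} [AddCommGroup V] [Module ℂ V] (S : Set V) : Prop :=
  ∃ (n : ℕ) (b : Fin n → V), LinearIndependent ℂ b ∧
    ∀ v : V, ∀ᵐ c : Fin n → ℂ ∂volume, v + ∑ i, c i • b i ∈ S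

/-- The ergodic circle rotation `x ↦ x + α (mod 1)` on `S¹ = ℝ/ℤ`. -/
noncomputable def circleRotation (a : ℝ) : UnitAddCircle → UnitAddCircle :=
  fun x => x + (a : UnitAddCircle)

lemma circleRotation_measurePreserving (a : ℝ) :
    MeasurePreserving (circleRotation a) volume volume :=
  measurePreserving_add_right volume _

/-- Abstract cyclicity criterion: an isometry diagonal in a Hilbert basis with distinct
eigenvalues has every vector with nonvanishing coordinates as cyclic vector. -/
lemma cyclic_of_coords_ne_zero {H : Type*} [NormedAddCommGroup H] [InnerProductSpace ℂ H]
    [CompleteSpace H] (b : HilbertBasis ℤ ℂ H) (U : H →L[ℂ] H) (hUn : ∀ x, ‖U x‖ = ‖x‖)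
    (ev : ℤ → ℂ) (hinj : Function.Injective ev) (hev : ∀ k, ‖ev k‖ = 1)
    (hU : ∀ k, U (b k) = ev k • b k) (g : H) (hg : ∀ k, inner ℂ (b k) g ≠ 0) :
    (Submodule.span ℂ (Set.range fun n : ℕ => (U ^ n) g)).topologicalClosure = ⊤ := by
  set M := (Submodule.span ℂ (Set.range fun n : ℕ => (U ^ n) g)).topologicalClosure with hM
  have hUi : ∀ x y, inner ℂ (U x) (U y) = inner ℂ x y := by
    intro x y
    exact (LinearIsometry.mk U.toLinearMap hUn).inner_map_map x y
  have ev0 : ∀ k, ev k ≠ 0 := fun k h => by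
    have := hev k
    rw [h] at this
    simp at this
  have hcoord : ∀ k x, inner ℂ (b k) (U x) = ev k * inner ℂ (b k) x := by
    intro k x
    have h1 := hUi (b k) x
    rw [hU, inner_smul_left] at h1
    have h2 : ev k * (starRingEnd ℂ) (ev k) = 1 := by
      rw [Complex.mul_conj, Complex.normSq_eq_norm_sq, hev]; simp
    rw [← h1, ← mul_assoc, h2, one_mul]
  have hbM : ∀ k, b k ∈ M := by
    intro k
    set f : H →L[ℂ] H := (ev k)⁻¹ • U with hf
    have hfn : ‖f‖ ≤ 1 := by
      refine ContinuousLinearMap.opNorm_le_bound _ zero_le_one fun x => ?_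
      simp [hf, norm_smul, hev, hUn]
    have hlim := f.tendsto_birkhoffAverage_orthogonalProjection hfn g
    set F := f.eqLocus (1 : H →L[ℂ] H) with hF
    set v : H := (F.orthogonalProjectionOnto g : H) with hv
    have hiter : ∀ n : ℕ, (f^[n]) g ∈ Submodule.span ℂ (Set.range fun n : ℕ => (U ^ n) g) := by
      intro n
      have : (f^[n]) g = ((ev k)⁻¹ ^ n) • (U ^ n) g := by
        have h := congrArg (fun A : H →L[ℂ] H => A g) (smul_pow (ev k)⁻¹ U n)
        simp only [smul_apply] at h
        rw [← h, ← hf, FunLike.coe_pow_eq_iterate]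
      rw [this]
      exact Submodule.smul_mem _ _ (Submodule.subset_span ⟨n, rfl⟩)
    have hvM : v ∈ M := by
      have hcl : IsClosed (M : Set H) := Submodule.isClosed_topologicalClosure _
      refine hcl.mem_of_tendsto hlim (Eventually.of_forall fun n => ?_)
      apply Submodule.le_topologicalClosure
      simp only [birkhoffAverage, birkhoffSum]
      exact Submodule.smul_mem _ _ (Submodule.sum_mem _ fun i _ => hiter i)
    have hvfix : U v = ev k • v := by
      have : f v = v := (F.orthogonalProjectionOnto g).2
      have h2 : (ev k)⁻¹ • U v = v := this
      rw [← h2, smul_smul, mul_inv_cancel₀ (ev0 k), one_smul, h2]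
    have hz : ∀ j, j ≠ k → inner ℂ (b j) v = 0 := by
      intro j hj
      have h1 := hcoord j v
      rw [hvfix, inner_smul_right] at h1
      have h2 : (ev k - ev j) * inner ℂ (b j) v = 0 := by rw [sub_mul, h1, sub_self]
      rcases mul_eq_zero.1 h2 with h | h
      · exact absurd (hinj (sub_eq_zero.1 h)).symm hj
      · exact h
    have hk : inner ℂ (b k) v = inner ℂ (b k) g := by
      have hbF : b k ∈ F := by
        change (ev k)⁻¹ • U (b k) = b k
        rw [hU, smul_smul, inv_mul_cancel₀ (ev0 k), one_smul]
      have := Submodule.inner_orthogonalProjectionOnto_eq_of_mem_left (K := F) ⟨b k, hbF⟩ g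
      exact this
    have hveq : v = (inner ℂ (b k) g : ℂ) • b k := by
      apply b.repr.injective
      ext j
      classical
      rw [b.repr_apply_apply, b.repr_apply_apply, inner_smul_right]
      by_cases hj : j = k
      · subst hj
        rw [hk, inner_self_eq_norm_sq_to_K, b.orthonormal.1]; simp
      · rw [hz j hj, b.orthonormal.2 hj, mul_zero]
    have : b k = (inner ℂ (b k) g : ℂ)⁻¹ • v := by
      rw [hveq, smul_smul, inv_mul_cancel₀ (hg k), one_smul]
    rw [this]
    exact M.smul_mem _ hvM
  rw [eq_top_iff, ← b.dense_span]
  refine Submodule.topologicalClosure_minimal _ ?_ (Submodule.isClosed_topologicalClosure _)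
  rw [Submodule.span_le]
  rintro _ ⟨k, rfl⟩
  exact hbM k

lemma exists_coords_ne_zero {H : Type*} [NormedAddCommGroup H] [InnerProductSpace ℂ H]
    (b : HilbertBasis ℤ ℂ H) : ∃ p : H, ∀ k, inner ℂ (b k) p ≠ 0 := by
  obtain ⟨e, he, c, hc, -⟩ := posSumOfEncodable one_pos ℤ
  have hmem : Memℓp (fun k : ℤ => ((Real.sqrt (e k) : ℝ) : ℂ)) 2 := by
    apply memℓp_gen
    convert hc.summable using 2 with k
    simp [abs_of_nonneg (Real.sqrt_nonneg _), Real.sq_sqrt (he k).le]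
  refine ⟨b.repr.symm ⟨_, hmem⟩, fun k => ?_⟩
  rw [← b.repr_apply_apply, LinearIsometryEquiv.apply_symm_apply]
  change ((Real.sqrt (e k) : ℝ) : ℂ) ≠ 0
  exact_mod_cast (Real.sqrt_pos.2 (he k)).ne'

lemma exists_eigenbasis (a : ℝ) (ha : Irrational a) (μ : Measure UnitAddCircle)
    (hμ : μ = AddCircle.haarAddCircle) (hT : MeasurePreserving (circleRotation a) μ μ) :
    ∃ (b : HilbertBasis ℤ ℂ (Lp ℂ 2 μ)) (ev : ℤ → ℂ), Function.Injective ev ∧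
      (∀ k, ‖ev k‖ = 1) ∧ ∀ k, koopman (circleRotation a) hT (b k) = ev k • b k := by
  subst hμ
  refine ⟨fourierBasis, fun k => fourier k (a : UnitAddCircle), ?_, ?_, ?_⟩
  · intro j k hjk
    have h : fourier (j - k) (a : UnitAddCircle) = 1 := by
      rw [sub_eq_add_neg, fourier_add, fourier_neg]
      change fourier j (a : UnitAddCircle) = fourier k (a : UnitAddCircle) at hjk
      rw [hjk, Complex.mul_conj, Complex.normSq_eq_norm_sq]
      rw [fourier_apply, Circle.norm_coe]; simp
    rw [fourier_coe_apply, Complex.exp_eq_one_iff] at h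
    obtain ⟨n, hn⟩ := h
    have hpi : (2 * Real.pi * Complex.I : ℂ) ≠ 0 := Complex.two_pi_I_ne_zero
    have h2 : (((j - k : ℤ) : ℂ) * a) = n := by
      apply mul_left_cancel₀ hpi
      rw [mul_comm _ (n : ℂ), ← hn]
      simp
      ring
    have h3 : ((j - k : ℤ) : ℝ) * a = n := by exact_mod_cast h2
    by_contra hne
    exact (ha.intCast_mul (sub_ne_zero.2 hne)).ne_int n h3
  · intro k
    exact Circle.norm_coe _
  · intro k
    rw [coe_fourierBasis]
    apply Lp.ext
    have h1 := Lp.coeFn_compMeasurePreserving (fourierLp (T := 1) 2 k) hT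
    have h2 := hT.quasiMeasurePreserving.ae_eq_comp (coeFn_fourierLp (T := 1) 2 k)
    have h3 := coeFn_fourierLp (T := 1) 2 k
    have h4 := Lp.coeFn_smul (fourier k (a : UnitAddCircle)) (fourierLp (T := 1) 2 k)
    change ⇑(Lp.compMeasurePreserving (circleRotation a) hT (fourierLp (T := 1) 2 k)) =ᵐ[_] _
    filter_upwards [h1, h2, h3, h4] with x h1 h2 h3 h4
    rw [h1, h2, h4, Pi.smul_apply, h3]
    simp [circleRotation, fourier_apply, smul_add, AddCircle.toCircle_add, mul_comm]

lemma koopman_norm_apply {X : Type*} [MeasurableSpace X] {μ : Measure X}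
    (T : X → X) (hT : MeasurePreserving T μ μ) (x : Lp ℂ 2 μ) : ‖koopman T hT x‖ = ‖x‖ :=
  Lp.norm_compMeasurePreserving x hT

lemma volume_eq_haar_unit :
    (volume : Measure UnitAddCircle) = AddCircle.haarAddCircle := by
  rw [AddCircle.volume_eq_smul_haarAddCircle]
  simp

/-- for an irrational rotation of `S¹ = ℝ/ℤ` (with Lebesgue measure) there is
a probe vector `p ∈ L²(S¹; ℂ)` such that for every `f ∈ L²(S¹; ℂ)` the set of `λ ∈ ℂ` for
which `f + λ p` fails to be a cyclic vector of the Koopman operator is at most countable;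
in particular the set of cyclic vectors is prevalent. -/
theorem circleRotation_cyclic_vectors_prevalent (a : ℝ) (ha : Irrational a) :
    ∃ p : Lp ℂ 2 (volume : Measure UnitAddCircle),
      (∀ f : Lp ℂ 2 (volume : Measure UnitAddCircle),
        Set.Countable {lam : ℂ | ¬ IsCyclicVector
          (koopman (circleRotation a) (circleRotation_measurePreserving a))
          (f + lam • p)}) ∧
      Prevalent {g : Lp ℂ 2 (volume : Measure UnitAddCircle) | IsCyclicVector
        (koopman (circleRotation a) (circleRotation_measurePreserving a)) g} := by
  obtain ⟨b, ev, hinj, hev, hU⟩ := exists_eigenbasis a ha volume volume_eq_haar_unit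
    (circleRotation_measurePreserving a)
  obtain ⟨p, hp⟩ := exists_coords_ne_zero b
  have key : ∀ f : Lp ℂ 2 (volume : Measure UnitAddCircle),
        Set.Countable {lam : ℂ | ¬ IsCyclicVector
          (koopman (circleRotation a) (circleRotation_measurePreserving a))
          (f + lam • p)} := by
    intro f
    refine (Set.countable_range
      fun k : ℤ => -(inner ℂ (b k) f : ℂ) / inner ℂ (b k) p).mono fun lam hlam => ?_
    by_contra hr
    apply hlam
    refine cyclic_of_coords_ne_zero b
      (koopman (circleRotation a) (circleRotation_measurePreserving a))
      (koopman_norm_apply _ _) ev hinj hev hU _ fun k h0 => hr ⟨k, ?_⟩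
    rw [inner_add_right, inner_smul_right] at h0
    change -(inner ℂ (b k) f : ℂ) / inner ℂ (b k) p = lam
    rw [div_eq_iff (hp k)]
    linear_combination -h0
  refine ⟨p, key, 1, fun _ => p, ?_, fun v => ?_⟩
  · have hp0 : p ≠ 0 := fun h => hp 0 (by rw [h]; exact inner_zero_right _)
    exact LinearIndependent.of_subsingleton (R := ℂ) (v := fun _ : Fin 1 => p) 0 hp0
  · rw [ae_iff]
    apply Set.Countable.measure_zero
    have hinj0 : Function.Injective (fun c : Fin 1 → ℂ => c 0) := by
      intro c d h
      funext i
      rw [Subsingleton.elim i 0]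
      exact h
    have := (key v).preimage_of_injOn (f := fun c : Fin 1 → ℂ => c 0) hinj0.injOn
    refine Set.Countable.mono ?_ this
    intro c hc hcyc
    apply hc
    rw [Fin.sum_univ_one]
    exact hcyc
end
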